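/- arXiv:2101.06758 — 2 statements merged into one kernel-verified Lean document; each statement's English description precedes it below -/
import Mathlib

section
/- Let γ > 1 be a real number and let D be a multiset of positive reals. Then UC(sk_γ(D)) = sk_{γ²}(D), i.e., for every integer j, sk_γ(D)(2j−1) + sk_γ(D)(2j) = sk_{γ²}(D)(j). Hence one uniform collapse of a sketch with base γ produces exactly the sketch of the same data with base γ². -/
/-!
Since `log_{γ^m} x = (log_γ x) / m`, the bucket `j` for base `γ ^ m` is the union of the `m` buckets
`m * (j - 1) < k ≤ m * j` for base `γ`. The uniform collapse is the case `m = 2`.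
-/

/-- The γ-sketch of a multiset D of positive reals. -/
noncomputable def sk (γ : ℝ) (D : Multiset ℝ) : ℤ → ℕ :=
  fun k => (D.filter (fun x => ⌈Real.logb γ x⌉ = k)).card

/-- The uniform collapse operator. -/
def UC (f : ℤ → ℕ) : ℤ → ℕ := fun j => f (2 * j - 1) + f (2 * j)

lemma ceil_div_natCast_eq_iff_mem_Ioc {K : Type*} [Field K] [LinearOrder K] [IsStrictOrderedRing K]
    [FloorRing K] {m : ℕ} (hm : 0 < m) (y : K) (j : ℤ) :
    ⌈y / m⌉ = j ↔ ⌈y⌉ ∈ Finset.Ioc (m * (j - 1)) (m * j) := by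
  have hm' : (0 : K) < m := Nat.cast_pos.2 hm
  rw [Finset.mem_Ioc, Int.lt_ceil, Int.ceil_le, Int.ceil_eq_iff, lt_div_iff₀' hm', div_le_iff₀' hm']
  push_cast
  rfl

lemma logb_pow_base (γ x : ℝ) (m : ℕ) : Real.logb (γ ^ m) x = Real.logb γ x / m := by
  rw [Real.logb, Real.logb, Real.log_pow, div_div, mul_comm]

lemma sum_card_filter_eq_card_filter_mem {α β : Type*} [DecidableEq β] (D : Multiset α) (f : α → β)
    (s : Finset β) :
    ∑ b ∈ s, (D.filter (fun x => f x = b)).card = (D.filter (fun x => f x ∈ s)).card := by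
  simp only [← Multiset.countP_eq_card_filter]
  induction D using Multiset.induction_on with
  | empty => simp
  | cons a D ih => simp only [Multiset.countP_cons, Finset.sum_add_distrib, ih, Finset.sum_ite_eq]

lemma sum_Ioc_sk {m : ℕ} (hm : 0 < m) (γ : ℝ) (D : Multiset ℝ) (j : ℤ) :
    ∑ k ∈ Finset.Ioc (m * (j - 1)) (m * j), sk γ D k = sk (γ ^ m) D j := by
  simp only [sk, sum_card_filter_eq_card_filter_mem, logb_pow_base,
    ceil_div_natCast_eq_iff_mem_Ioc hm]

lemma UC_eq_sum_Ioc (f : ℤ → ℕ) (j : ℤ) :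
    UC f j = ∑ k ∈ Finset.Ioc (2 * (j - 1)) (2 * j), f k := by
  have hIoc : Finset.Ioc (2 * (j - 1)) (2 * j) = {2 * j - 1, 2 * j} := by
    ext k
    simp only [Finset.mem_Ioc, Finset.mem_insert, Finset.mem_singleton]
    omega
  rw [hIoc, Finset.sum_pair (by omega), UC]

/-- One uniform collapse of a sketch with base γ produces
exactly the sketch of the same data with base γ². -/
theorem uniform_collapse_squares_base (γ : ℝ) (hγ : 1 < γ) (D : Multiset ℝ)
    (hpos : ∀ x ∈ D, 0 < x) :
    UC (sk γ D) = sk (γ ^ 2) D := by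
  funext j
  rw [UC_eq_sum_Ioc]
  exact sum_Ioc_sk two_pos γ D j
end

section
/- (Bound on the final base after collapsing, underlying Theorem 2.) Let γ₀ > 1 be a real, let m ≥ 2 be a natural number, let x_min, x_max be reals with 0 < x_min ≤ x_max, let D be a multiset of reals in [x_min, x_max], and let t ≥ 1 be a natural number. If the set of bucket indices of D at base γ₀^(2^(t−1)) has cardinality strictly greater than m (i.e., one more collapse was still needed), then the base after the next collapse satisfies γ₀^(2^t) ≤ (x_max/x_min)^(2/(m−1)). Hence the final base of UDDSketch, and therefore its guaranteed relative accuracy, is bounded in terms of x_max/x_min and the sketch size m, independently of the input distribution. -/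
/-!
The bucket index is monotone, so the bucket indices of a subset of `[a, b]` are integers between
`⌈log_γ a⌉` and `⌈log_γ b⌉`, and there are fewer than `log_γ (b / a) + 2` of those. If there are
more than `m` buckets, then `m - 1` is less than `log_γ (b / a)`, which bounds every nonnegative
power of `γ`, and in particular the base `γ ^ 2` produced by a collapse, by a power of `b / a`.
-/

theorem ncard_image_le_card_Icc_of_monotoneOn {α β : Type*} [Preorder α] [Preorder β]
    [LocallyFiniteOrder β] {f : α → β} {a b : α} {s : Set α}
    (hf : MonotoneOn f (Set.Icc a b)) (hs : s ⊆ Set.Icc a b) :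
    (f '' s).ncard ≤ (Finset.Icc (f a) (f b)).card := by
  rw [← Set.ncard_coe_finset, Finset.coe_Icc]
  exact Set.ncard_le_ncard ((Set.image_mono hs).trans hf.image_Icc_subset) (Set.finite_Icc _ _)

theorem rpow_le_rpow_div_of_le_logb {g r c p : ℝ} (hg : 1 < g) (hr : 0 < r) (hc : 0 < c)
    (hp : 0 ≤ p) (h : c ≤ Real.logb g r) : g ^ p ≤ r ^ (p / c) := by
  rw [← Real.le_logb_iff_rpow_le hg (Real.rpow_pos_of_pos hr _),
    Real.logb_rpow_eq_mul_logb_of_pos hr]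
  calc p = p / c * c := (div_mul_cancel₀ p hc.ne').symm
    _ ≤ p / c * Real.logb g r := by gcongr

/-- The index `i_γ(x) = ⌈log_γ x⌉` of the bucket containing `x` in a sketch with base `γ`; it is
meaningful for `1 < γ` and `0 < x`. -/
noncomputable def bucketIndex (γ x : ℝ) : ℤ :=
  ⌈Real.logb γ x⌉

theorem monotoneOn_bucketIndex {γ : ℝ} (hγ : 1 < γ) :
    MonotoneOn (bucketIndex γ) (Set.Ioi 0) :=
  Int.ceil_mono.comp_monotoneOn (Real.strictMonoOn_logb hγ).monotoneOn

theorem bucketIndex_sub_bucketIndex_lt (γ : ℝ) {a b : ℝ} (ha : a ≠ 0) (hb : b ≠ 0) :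
    (bucketIndex γ b - bucketIndex γ a : ℝ) < Real.logb γ (b / a) + 1 := by
  have h_upper : (bucketIndex γ b : ℝ) < Real.logb γ b + 1 := Int.ceil_lt_add_one _
  have h_lower : Real.logb γ a ≤ bucketIndex γ a := Int.le_ceil _
  rw [Real.logb_div hb ha]
  linarith

theorem ncard_image_bucketIndex_lt {γ a b : ℝ} {s : Set ℝ} (hγ : 1 < γ) (ha : 0 < a)
    (hab : a ≤ b) (hs : s ⊆ Set.Icc a b) :
    ((bucketIndex γ '' s).ncard : ℝ) < Real.logb γ (b / a) + 2 := by
  have h_mono : MonotoneOn (bucketIndex γ) (Set.Icc a b) :=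
    (monotoneOn_bucketIndex hγ).mono fun _ hx => ha.trans_le hx.1
  have h_index_le : bucketIndex γ a ≤ bucketIndex γ b :=
    h_mono (Set.left_mem_Icc.2 hab) (Set.right_mem_Icc.2 hab) hab
  have h_card : ((bucketIndex γ '' s).ncard : ℤ) ≤ bucketIndex γ b + 1 - bucketIndex γ a := by
    have h_le := ncard_image_le_card_Icc_of_monotoneOn h_mono hs
    rw [Int.card_Icc] at h_le
    omega
  calc ((bucketIndex γ '' s).ncard : ℝ) ≤ bucketIndex γ b + 1 - bucketIndex γ a := by
        exact_mod_cast h_card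
    _ < Real.logb γ (b / a) + 2 := by
        linarith [bucketIndex_sub_bucketIndex_lt γ ha.ne' (ha.trans_le hab).ne']

theorem final_base_bound_general {γ xmin xmax : ℝ} {m : ℕ} {s : Set ℝ} (hγ : 1 < γ) (hm : 2 ≤ m)
    (hmin : 0 < xmin) (hs : s ⊆ Set.Icc xmin xmax) (hcard : m < (bucketIndex γ '' s).ncard) :
    γ ^ 2 ≤ (xmax / xmin) ^ ((2 : ℝ) / ((m : ℝ) - 1)) := by
  obtain ⟨x, hx⟩ : s.Nonempty :=
    Set.image_nonempty.1 (Set.nonempty_of_ncard_ne_zero (Nat.ne_zero_of_lt hcard))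
  have hle : xmin ≤ xmax := (hs hx).1.trans (hs hx).2
  have h_log : (m : ℝ) - 1 ≤ Real.logb γ (xmax / xmin) := by
    have h_succ : (m : ℝ) + 1 ≤ (bucketIndex γ '' s).ncard := by exact_mod_cast hcard
    linarith [ncard_image_bucketIndex_lt hγ hmin hle hs]
  have hm_pos : (0 : ℝ) < (m : ℝ) - 1 := sub_pos.2 (by exact_mod_cast hm)
  rw [← Real.rpow_two]
  exact rpow_le_rpow_div_of_le_logb hγ (div_pos (hmin.trans_le hle) hmin) hm_pos zero_le_two h_log

/-- Bound on the final base after collapsing, underlying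
Theorem 2: if at base γ₀^(2^(t−1)) the multiset D of reals in
[x_min, x_max] still occupies strictly more than m buckets, then the base
after the next collapse satisfies γ₀^(2^t) ≤ (x_max/x_min)^(2/(m−1)). -/
theorem final_base_bound (γ₀ : ℝ) (hγ : 1 < γ₀) (m : ℕ) (hm : 2 ≤ m)
    (xmin xmax : ℝ) (hmin : 0 < xmin) (hle : xmin ≤ xmax)
    (D : Multiset ℝ) (hmem : ∀ x ∈ D, xmin ≤ x ∧ x ≤ xmax)
    (t : ℕ) (ht : 1 ≤ t)
    (hcard : m < {k : ℤ | ∃ x ∈ D, ⌈Real.logb (γ₀ ^ 2 ^ (t - 1)) x⌉ = k}.ncard) :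
    γ₀ ^ 2 ^ t ≤ (xmax / xmin) ^ ((2 : ℝ) / ((m : ℝ) - 1)) := by
  rw [← Nat.sub_add_cancel ht, pow_succ 2, pow_mul]
  exact final_base_bound_general (s := {x | x ∈ D}) (one_lt_pow₀ hγ (by positivity)) hm hmin hmem
    hcard
end
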